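/- Let X be a real-valued random variable with unbounded distribution F and Y a nonnegative random variable with distribution G, neither degenerate at zero, and let H be the distribution of XY. Suppose (X,Y) follows an FGM distribution with parameter |θ|<1 and satisfies Assumption 2 (Ḡ(bx)=o(H̄(x)) as x→∞ for every constant b>0). If F belongs to the class L(γ) for some γ≥0, then H belongs to L(γ/β_G), where β_G=sup{y:G(y)<1} and γ/β_G is understood as 0 when β_G=∞. -/

import Mathlib

open MeasureTheory ProbabilityTheory Filter Set Asymptotics

noncomputable section

/-- The tail (survival) function `x ↦ P(Z > x)` of a random variable `Z`. -/
def rvTail {Ω : Type*} [MeasureSpace Ω] (Z : Ω → ℝ) (x : ℝ) : ℝ :=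
  (ℙ {ω | x < Z ω}).toReal

/-- The cumulative distribution function `x ↦ P(Z ≤ x)` of a random variable `Z`. -/
def rvCdf {Ω : Type*} [MeasureSpace Ω] (Z : Ω → ℝ) (x : ℝ) : ℝ :=
  (ℙ {ω | Z ω ≤ x}).toReal

/-- The left limit of the cdf, `G(y-) = P(Z < y)`. -/
def rvCdfLeft {Ω : Type*} [MeasureSpace Ω] (Z : Ω → ℝ) (y : ℝ) : ℝ :=
  (ℙ {ω | Z ω < y}).toReal

/-- The distribution of `Z` is unbounded (above): its tail is positive for every `x > 0`. -/
def UnboundedDist {Ω : Type*} [MeasureSpace Ω] (Z : Ω → ℝ) : Prop :=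
  ∀ x > 0, 0 < rvTail Z x

/-- The support `D_Z = {y : P(Z ∈ (y - δ, y + δ)) > 0 for all δ > 0}` of the
distribution of `Z`. -/
def distSupport {Ω : Type*} [MeasureSpace Ω] (Z : Ω → ℝ) : Set ℝ :=
  {y | ∀ δ > 0, 0 < ℙ {ω | Z ω ∈ Ioo (y - δ) (y + δ)}}

/-- The distribution of `Z` belongs to the class `L(γ)`: it is unbounded above and
`P(Z > x - t) ~ e^{γ t} P(Z > x)` as `x → ∞`, for every `t > 0`. -/
def MemLGamma {Ω : Type*} [MeasureSpace Ω] (Z : Ω → ℝ) (γ : ℝ) : Prop :=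
  UnboundedDist Z ∧
    ∀ t > 0, (fun x => rvTail Z (x - t)) ~[atTop] (fun x => Real.exp (γ * t) * rvTail Z x)

/-- The tail of the two-fold convolution of the distribution of `Z` with itself. -/
def convSqTail {Ω : Type*} [MeasureSpace Ω] (Z : Ω → ℝ) (x : ℝ) : ℝ :=
  (((Measure.map Z ℙ).conv (Measure.map Z ℙ)) (Ioi x)).toReal

/-- The distribution of `Z` belongs to the class `S(γ)`: it belongs to `L(γ)`, the
exponential moment `c = ∫ e^{γ y} dV(y)` is finite, and the tail of the two-fold
convolution satisfies `V̄*²(x) ~ 2 c V̄(x)` as `x → ∞`. -/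
def MemSGamma {Ω : Type*} [MeasureSpace Ω] (Z : Ω → ℝ) (γ : ℝ) : Prop :=
  MemLGamma Z γ ∧
    Integrable (fun y => Real.exp (γ * y)) (Measure.map Z ℙ) ∧
    (fun x => convSqTail Z x) ~[atTop]
      (fun x => 2 * (∫ y, Real.exp (γ * y) ∂(Measure.map Z ℙ)) * rvTail Z x)

open Classical in
/-- `γ / β_G`, where `β_G = sup {y : G(y) < 1}` is the right endpoint of the distribution
of `Z`, with the convention that `γ / β_G = 0` when `β_G = ∞`.
(Note that `G(y) < 1 ↔ P(Z > y) > 0`.) -/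
def gammaOverBeta {Ω : Type*} [MeasureSpace Ω] (Z : Ω → ℝ) (γ : ℝ) : ℝ :=
  if BddAbove {y : ℝ | 0 < rvTail Z y} then γ / sSup {y : ℝ | 0 < rvTail Z y} else 0

/-- Assumption 2: `Ḡ(b x) = o(H̄(x))` as `x → ∞` for every constant `b > 0`, where `G` is
the distribution of `Y` and `H` is the distribution of the product `X Y`. -/
def Assumption2 {Ω : Type*} [MeasureSpace Ω] (X Y : Ω → ℝ) : Prop :=
  ∀ b > 0, (fun x => rvTail Y (b * x)) =o[atTop] fun x => rvTail (fun ω => X ω * Y ω) x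

/-- Assumption 1: `K x y` is the conditional probability `P(X > x | Y = y)`, namely for
`y` in the support of `Y` it is the limit of `P(X > x | Y ∈ (y - δ, y + δ])` as `δ → 0+`,
and for `y` outside the support it is the unconditional probability `P(X > x)` (and then
`h y = 1`); `h : [0,∞) → (0,∞)` is a measurable function such that
`P(X > x | Y = y) ~ h(y) P(X > x)` as `x → ∞`, uniformly for `y ≥ 0`. -/
def Assumption1 {Ω : Type*} [MeasureSpace Ω] (X Y : Ω → ℝ) (h : ℝ → ℝ) (K : ℝ → ℝ → ℝ) :
    Prop :=
  Measurable h ∧ (∀ y, 0 ≤ y → 0 < h y) ∧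
    (∀ y, y ∉ distSupport Y → h y = 1 ∧ ∀ x, K x y = rvTail X x) ∧
    (∀ y ∈ distSupport Y, ∀ x : ℝ,
      Tendsto
        (fun δ : ℝ => (ℙ {ω | x < X ω ∧ Y ω ∈ Ioc (y - δ) (y + δ)}).toReal /
          (ℙ {ω | Y ω ∈ Ioc (y - δ) (y + δ)}).toReal)
        (nhdsWithin 0 (Ioi 0)) (nhds (K x y))) ∧
    ∀ ε > 0, ∀ᶠ x in atTop, ∀ y, 0 ≤ y → |K x y / (h y * rvTail X x) - 1| < ε

/-- `(X, Y)` follows a Farlie–Gumbel–Morgenstern (FGM) distribution with parameter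
`θ ∈ [-1, 1]`: `P(X > x, Y > y) = F̄(x) Ḡ(y) (1 + θ F(x) G(y))` for all `x` in the
support of `X` and `y` in the support of `Y`. -/
def FGM {Ω : Type*} [MeasureSpace Ω] (X Y : Ω → ℝ) (θ : ℝ) : Prop :=
  θ ∈ Icc (-1 : ℝ) 1 ∧
    ∀ x ∈ distSupport X, ∀ y ∈ distSupport Y,
      (ℙ {ω | x < X ω ∧ y < Y ω}).toReal =
        rvTail X x * rvTail Y y * (1 + θ * rvCdf X x * rvCdf Y y)

/-- `(X, Y)` follows a bivariate Sarmanov distribution with kernels `φ₁, φ₂` and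
parameter `θ`: the joint law has density `1 + θ φ₁(x) φ₂(y)` with respect to the product
of the marginal laws, where `φ₁, φ₂` are measurable, `E φ₁(X) = E φ₂(Y) = 0` and
`1 + θ φ₁(x) φ₂(y) ≥ 0`. -/
def Sarmanov {Ω : Type*} [MeasureSpace Ω] (X Y : Ω → ℝ) (φ₁ φ₂ : ℝ → ℝ) (θ : ℝ) : Prop :=
  Measurable φ₁ ∧ Measurable φ₂ ∧
    Integrable (fun ω => φ₁ (X ω)) ℙ ∧ Integrable (fun ω => φ₂ (Y ω)) ℙ ∧
    (∫ ω, φ₁ (X ω)) = 0 ∧ (∫ ω, φ₂ (Y ω)) = 0 ∧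
    (∀ x y : ℝ, 0 ≤ y → 0 ≤ 1 + θ * φ₁ x * φ₂ y) ∧
    Measure.map (fun ω => (X ω, Y ω)) ℙ =
      ((Measure.map X ℙ).prod (Measure.map Y ℙ)).withDensity
        (fun p => ENNReal.ofReal (1 + θ * φ₁ p.1 * φ₂ p.2))

/-- The condition `ψ(y) = lim_{δ → 0+} (∫_{y-δ}^{y+δ} φ₂(v) G(dv)) / (G(y+δ) - G(y-δ))`
for all `y` in the support of `Y`. -/
def SarmanovPsi {Ω : Type*} [MeasureSpace Ω] (Y : Ω → ℝ) (φ₂ ψ : ℝ → ℝ) : Prop :=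
  ∀ y ∈ distSupport Y,
    Tendsto
      (fun δ : ℝ => (∫ v in Ioc (y - δ) (y + δ), φ₂ v ∂(Measure.map Y ℙ)) /
        (rvCdf Y (y + δ) - rvCdf Y (y - δ)))
      (nhdsWithin 0 (Ioi 0)) (nhds (ψ y))


/-- Comparison of product tails from comparison on thin strips. -/
lemma strip_compare {Ω : Type*} [MeasurableSpace Ω] (μ : Measure Ω) [IsProbabilityMeasure μ]
    (X Y : Ω → ℝ) (hXm : Measurable X) (hYm : Measurable Y) (M N x x' : ℝ) (C : ENNReal)
    (hC : C ≠ ⊤)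
    (hM : 0 ≤ M) (hx : 0 < x) (hx' : 0 < x')
    (h : ∀ a b, M ≤ a → a < b → b ≤ N →
      μ {ω | x' < X ω * a ∧ a < Y ω ∧ Y ω ≤ b} ≤ C * μ {ω | x < X ω * a ∧ a < Y ω ∧ Y ω ≤ b}) :
    μ {ω | x' < X ω * Y ω ∧ M < Y ω ∧ Y ω ≤ N} ≤
      C * μ {ω | x < X ω * Y ω ∧ M < Y ω ∧ Y ω ≤ N} := by
  let a : ℕ → ℕ → ℝ := fun n k => M + (k : ℝ) / ((n : ℝ) + 1)
  have haM : ∀ n k, M ≤ a n k := fun n k => by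
    have : (0 : ℝ) ≤ (k : ℝ) / ((n : ℝ) + 1) := by positivity
    simp only [a]; linarith
  have hamono : ∀ n k l, k ≤ l → a n k ≤ a n l := fun n k l hkl => by
    simp only [a]; gcongr
  let E : ℝ → ℕ → ℕ → Set Ω := fun z n k =>
    {ω | z < X ω * a n k ∧ a n k < Y ω ∧ Y ω ≤ min (a n (k + 1)) N}
  have hEm : ∀ z n k, MeasurableSet (E z n k) := fun z n k => by
    apply MeasurableSet.inter (measurableSet_lt measurable_const (hXm.mul_const _))
    exact MeasurableSet.inter (measurableSet_lt measurable_const hYm)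
      (measurableSet_le hYm measurable_const)
  have hdis : ∀ z n, Pairwise (Function.onFun Disjoint (E z n)) := by
    have key : ∀ z n k l, k < l → Disjoint (E z n k) (E z n l) := by
      intro z n k l hkl
      rw [Set.disjoint_left]
      rintro ω ⟨_, _, h3⟩ ⟨_, h5, _⟩
      have h6 := hamono n (k + 1) l hkl
      have h7 := min_le_left (a n (k + 1)) N
      linarith
    intro z n k l hkl
    rcases lt_or_gt_of_ne hkl with h1 | h1
    · exact key z n k l h1
    · exact (key z n l k h1).symm
  have hlim : ∀ z, 0 < z → Tendsto (fun n => μ (⋃ k, E z n k)) atTop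
      (nhds (μ {ω | z < X ω * Y ω ∧ M < Y ω ∧ Y ω ≤ N})) := by
    intro z hz
    apply tendsto_measure_of_tendsto_indicator_of_isFiniteMeasure
    · exact fun n => MeasurableSet.iUnion (hEm z n)
    intro ω
    by_cases hω : z < X ω * Y ω ∧ M < Y ω ∧ Y ω ≤ N
    · obtain ⟨h1, h2, h3⟩ := hω
      have ht : Tendsto (fun n : ℕ => X ω * (Y ω - 1 / ((n : ℝ) + 1))) atTop
          (nhds (X ω * (Y ω - 0))) :=
        (tendsto_const_nhds.sub tendsto_one_div_add_atTop_nhds_zero_nat).const_mul _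
      rw [sub_zero] at ht
      filter_upwards [ht.eventually_const_lt h1] with n hn
      refine ⟨fun _ => ⟨h1, h2, h3⟩, fun _ => ?_⟩
      have hn1 : (0 : ℝ) < (n : ℝ) + 1 := by positivity
      have hpos : 0 < (Y ω - M) * ((n : ℝ) + 1) := mul_pos (by linarith) hn1
      obtain ⟨k, hk⟩ : ∃ k : ℕ, ⌈(Y ω - M) * ((n : ℝ) + 1)⌉₊ = k + 1 :=
        Nat.exists_eq_succ_of_ne_zero (Nat.ceil_pos.mpr hpos).ne'
      have hk1 : (Y ω - M) * ((n : ℝ) + 1) ≤ k + 1 := by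
        have := Nat.le_ceil ((Y ω - M) * ((n : ℝ) + 1))
        rw [hk] at this; exact_mod_cast this
      have hk2 : (k : ℝ) < (Y ω - M) * ((n : ℝ) + 1) := by
        apply Nat.lt_ceil.mp; omega
      have hak : a n k < Y ω := by
        have : (k : ℝ) / ((n : ℝ) + 1) < Y ω - M := by rwa [div_lt_iff₀ hn1]
        simp only [a]; linarith
      have hak1 : Y ω ≤ a n (k + 1) := by
        have : Y ω - M ≤ ((k + 1 : ℕ) : ℝ) / ((n : ℝ) + 1) := by
          rw [le_div_iff₀ hn1]; exact_mod_cast hk1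
        simp only [a]; linarith
      have hXpos : 0 < X ω := by
        by_contra hX
        have : X ω * Y ω ≤ 0 := mul_nonpos_of_nonpos_of_nonneg (not_lt.mp hX) (by linarith)
        linarith
      refine Set.mem_iUnion.mpr ⟨k, lt_of_lt_of_le hn ?_, hak, le_min hak1 h3⟩
      apply mul_le_mul_of_nonneg_left _ hXpos.le
      have : a n (k + 1) = a n k + 1 / ((n : ℝ) + 1) := by
        simp only [a]; push_cast; ring
      linarith
    · refine Eventually.of_forall fun n => ⟨fun hE => ?_, fun h' => absurd h' hω⟩
      obtain ⟨k, h1, h2, h3⟩ := Set.mem_iUnion.mp hE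
      have ha0 := haM n k
      have hXpos : 0 < X ω := by
        by_contra hX
        have : X ω * a n k ≤ 0 :=
          mul_nonpos_of_nonpos_of_nonneg (not_lt.mp hX) (by linarith)
        linarith
      refine ⟨h1.trans ?_, by linarith, h3.trans (min_le_right _ _)⟩
      exact mul_lt_mul_of_pos_left h2 hXpos
  refine le_of_tendsto_of_tendsto' (hlim x' hx') (ENNReal.Tendsto.const_mul (hlim x hx)
    (Or.inr hC)) fun n => ?_
  rw [measure_iUnion (hdis x' n) (hEm x' n), measure_iUnion (hdis x n) (hEm x n),
    ← ENNReal.tsum_mul_left]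
  refine ENNReal.tsum_le_tsum fun k => ?_
  by_cases hk : a n k < min (a n (k + 1)) N
  · exact h _ _ (haM n k) hk (min_le_right _ _)
  · have : E x' n k = ∅ := by
      ext ω
      simp only [E, Set.mem_ofPred_eq, Set.mem_empty_iff_false, iff_false]
      rintro ⟨_, h2, h3⟩
      exact hk (h2.trans_le h3)
    rw [this]; simp

lemma support_shift {Ω : Type*} [MeasureSpace Ω] [IsProbabilityMeasure (ℙ : Measure Ω)]
    (Z : Ω → ℝ) (hZ : Measurable Z) (x : ℝ) :
    ℙ {ω | Z ω ≤ x} = 0 ∨ ∃ x' ∈ distSupport Z, x' ≤ x ∧ ℙ {ω | x' < Z ω ∧ Z ω ≤ x} = 0 := by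
  have hsupp : distSupport Z = (Measure.map Z ℙ).support := by
    ext y
    rw [(nhds_basis_Ioo_pos y).mem_measureSupport]
    refine forall_congr' fun δ => forall_congr' fun _ => ?_
    rw [Measure.map_apply hZ measurableSet_Ioo]; rfl
  rw [hsupp]
  set ν := Measure.map Z ℙ
  by_cases h0 : ℙ {ω | Z ω ≤ x} = 0
  · exact Or.inl h0
  right
  have h1 : 0 < ν (Iic x) := by
    rw [Measure.map_apply hZ measurableSet_Iic]
    exact pos_iff_ne_zero.mpr h0
  have hne : (Iic x ∩ ν.support).Nonempty := Measure.nonempty_inter_support_of_pos h1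
  have hbdd : BddAbove (Iic x ∩ ν.support) := ⟨x, fun z hz => hz.1⟩
  have hmem : sSup (Iic x ∩ ν.support) ∈ Iic x ∩ ν.support :=
    (isClosed_Iic.inter Measure.isClosed_support).csSup_mem hne hbdd
  refine ⟨_, hmem.2, hmem.1, ?_⟩
  have : ν (Ioc (sSup (Iic x ∩ ν.support)) x) = 0 := by
    refine measure_mono_null (t := ν.supportᶜ) ?_ Measure.measure_compl_support
    intro z hz hzs
    exact absurd (le_csSup hbdd ⟨hz.2, hzs⟩) (not_le.mpr hz.1)
  rw [Measure.map_apply hZ measurableSet_Ioc] at this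
  exact this

lemma rvCdf_eq {Ω : Type*} [MeasureSpace Ω] [IsProbabilityMeasure (ℙ : Measure Ω)]
    (Z : Ω → ℝ) (hZ : Measurable Z) (x : ℝ) : rvCdf Z x = 1 - rvTail Z x := by
  have h := measureReal_compl (μ := (ℙ : Measure Ω)) (measurableSet_lt measurable_const hZ :
    MeasurableSet {ω | x < Z ω})
  rw [probReal_univ] at h
  rw [rvTail, ← Measure.real, ← h, rvCdf, Measure.real]
  congr 2
  ext ω; simp

lemma fgm_ext {Ω : Type*} [MeasureSpace Ω] [IsProbabilityMeasure (ℙ : Measure Ω)]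
    (X Y : Ω → ℝ) (hXm : Measurable X) (hYm : Measurable Y)
    (θ : ℝ) (hFGM : FGM X Y θ) (x y : ℝ) :
    (ℙ {ω | x < X ω ∧ y < Y ω}).toReal =
        rvTail X x * rvTail Y y * (1 + θ * (1 - rvTail X x) * (1 - rvTail Y y)) := by
  have key : ∀ (Z : Ω → ℝ) (x x' : ℝ) (A : Set Ω), x' ≤ x → ℙ {ω | x' < Z ω ∧ Z ω ≤ x} = 0 →
      ℙ ({ω | x < Z ω} ∩ A) = ℙ ({ω | x' < Z ω} ∩ A) := by
    intro Z x x' A hx h0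
    apply le_antisymm
    · exact measure_mono fun ω hω => ⟨lt_of_le_of_lt hx hω.1, hω.2⟩
    · calc ℙ ({ω | x' < Z ω} ∩ A)
          ≤ ℙ (({ω | x < Z ω} ∩ A) ∪ {ω | x' < Z ω ∧ Z ω ≤ x}) := by
            refine measure_mono fun ω hω => ?_
            by_cases h : x < Z ω
            · exact Or.inl ⟨h, hω.2⟩
            · exact Or.inr ⟨hω.1, not_lt.mp h⟩
        _ ≤ _ := measure_union_le _ _
        _ = _ := by rw [h0, add_zero]
  have key0 : ∀ (Z : Ω → ℝ) (x : ℝ) (A : Set Ω), ℙ {ω | Z ω ≤ x} = 0 →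
      ℙ ({ω | x < Z ω} ∩ A) = ℙ A := by
    intro Z x A h0
    apply le_antisymm
    · exact measure_mono inter_subset_right
    · calc ℙ A ≤ ℙ (({ω | x < Z ω} ∩ A) ∪ {ω | Z ω ≤ x}) := by
            refine measure_mono fun ω hω => ?_
            by_cases h : x < Z ω
            · exact Or.inl ⟨h, hω⟩
            · exact Or.inr (not_lt.mp h)
        _ ≤ _ := measure_union_le _ _
        _ = _ := by rw [h0, add_zero]
  have tail1 : ∀ (Z : Ω → ℝ) (x x' : ℝ), x' ≤ x → ℙ {ω | x' < Z ω ∧ Z ω ≤ x} = 0 →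
      rvTail Z x = rvTail Z x' := by
    intro Z x x' hx h0
    have := key Z x x' univ hx h0
    simp only [inter_univ] at this
    rw [rvTail, this, rvTail]
  have tail0 : ∀ (Z : Ω → ℝ) (x : ℝ), ℙ {ω | Z ω ≤ x} = 0 → rvTail Z x = 1 := by
    intro Z x h0
    have := key0 Z x univ h0
    simp only [inter_univ] at this
    rw [rvTail, this]; simp
  have e1 : {ω | x < X ω ∧ y < Y ω} = {ω | x < X ω} ∩ {ω | y < Y ω} := rfl
  rw [e1]
  rcases support_shift X hXm x with hx | ⟨x', hx's, hx'x, hx0⟩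
  · rw [key0 X x _ hx, tail0 X x hx]
    change rvTail Y y = _
    ring
  rcases support_shift Y hYm y with hy | ⟨y', hy's, hy'y, hy0⟩
  · rw [inter_comm, key0 Y y _ hy, tail0 Y y hy]
    change rvTail X x = _
    ring
  rw [key X x x' _ hx'x hx0, inter_comm, key Y y y' _ hy'y hy0, inter_comm, tail1 X x x' hx'x hx0,
    tail1 Y y y' hy'y hy0, ← rvCdf_eq X hXm, ← rvCdf_eq Y hYm]
  exact hFGM.2 x' hx's y' hy's

lemma fgm_strip {Ω : Type*} [MeasureSpace Ω] [IsProbabilityMeasure (ℙ : Measure Ω)]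
    (X Y : Ω → ℝ) (hXm : Measurable X) (hYm : Measurable Y)
    (θ : ℝ) (hFGM : FGM X Y θ) (u a b : ℝ) (hab : a ≤ b) :
    (ℙ : Measure Ω).real {ω | u < X ω ∧ a < Y ω ∧ Y ω ≤ b} =
      (rvTail Y a - rvTail Y b) * (rvTail X u *
        (1 + θ * (1 - rvTail X u) * (1 - rvTail Y a - rvTail Y b))) := by
  have h1 := fgm_ext X Y hXm hYm θ hFGM u a
  have h2 := fgm_ext X Y hXm hYm θ hFGM u b
  have e : {ω | u < X ω ∧ a < Y ω ∧ Y ω ≤ b} =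
      {ω | u < X ω ∧ a < Y ω} \ {ω | u < X ω ∧ b < Y ω} := by
    ext ω
    simp only [Set.mem_ofPred_eq, Set.mem_sdiff, not_and, not_lt]
    tauto
  rw [e, measureReal_sdiff]
  · simp only [Measure.real]
    rw [h1, h2]; ring
  · exact fun ω hω => ⟨hω.1, lt_of_le_of_lt hab hω.2⟩
  · exact (measurableSet_lt measurable_const hXm).inter (measurableSet_lt measurable_const hYm)

lemma rvTail_nonneg {Ω : Type*} [MeasureSpace Ω] (Z : Ω → ℝ) (x : ℝ) : 0 ≤ rvTail Z x :=
  ENNReal.toReal_nonneg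

lemma rvTail_le_one {Ω : Type*} [MeasureSpace Ω] [IsProbabilityMeasure (ℙ : Measure Ω)]
    (Z : Ω → ℝ) (x : ℝ) : rvTail Z x ≤ 1 :=
  measureReal_le_one

lemma rvTail_anti {Ω : Type*} [MeasureSpace Ω] [IsProbabilityMeasure (ℙ : Measure Ω)]
    (Z : Ω → ℝ) {x y : ℝ} (h : x ≤ y) : rvTail Z y ≤ rvTail Z x :=
  measureReal_mono fun _ hω => lt_of_le_of_lt h hω

lemma rvTail_tendsto {Ω : Type*} [MeasureSpace Ω] [IsProbabilityMeasure (ℙ : Measure Ω)]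
    (Z : Ω → ℝ) (hZ : Measurable Z) : Tendsto (rvTail Z) atTop (nhds 0) := by
  have h : Tendsto (fun x => (ℙ : Measure Ω) {ω | x < Z ω}) atTop (nhds (ℙ (∅ : Set Ω))) := by
    apply tendsto_measure_of_tendsto_indicator_of_isFiniteMeasure
    · exact fun x => measurableSet_lt measurable_const hZ
    · intro ω
      filter_upwards [eventually_ge_atTop (Z ω)] with x hx
      simpa using hx
  rw [measure_empty] at h
  have h2 := (ENNReal.tendsto_toReal ENNReal.zero_ne_top).comp h
  rw [ENNReal.toReal_zero] at h2
  exact h2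

lemma memL_pos {Ω : Type*} [MeasureSpace Ω] [IsProbabilityMeasure (ℙ : Measure Ω)]
    {X : Ω → ℝ} (h : UnboundedDist X) (x : ℝ) : 0 < rvTail X x :=
  (h (max x 1) (by positivity)).trans_le (rvTail_anti X (le_max_left _ _))

lemma memL_ratio {Ω : Type*} [MeasureSpace Ω] [IsProbabilityMeasure (ℙ : Measure Ω)]
    {X : Ω → ℝ} {γ : ℝ} (h : MemLGamma X γ) (s : ℝ) :
    Tendsto (fun u => rvTail X (u - s) / rvTail X u) atTop (nhds (Real.exp (γ * s))) := by
  have hpos := memL_pos h.1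
  have pos_case : ∀ s > 0,
      Tendsto (fun u => rvTail X (u - s) / rvTail X u) atTop (nhds (Real.exp (γ * s))) := by
    intro s hs
    have h1 := h.2 s hs
    rw [isEquivalent_iff_tendsto_one
      (Eventually.of_forall fun x => (mul_pos (Real.exp_pos _) (hpos x)).ne')] at h1
    have h2 := h1.const_mul (Real.exp (γ * s))
    rw [mul_one] at h2
    refine h2.congr fun u => ?_
    have := (hpos u).ne'
    have := (Real.exp_pos (γ * s)).ne'
    simp only [Pi.div_apply]
    field_simp
  rcases lt_trichotomy s 0 with hs | hs | hs
  · have h1 := ((pos_case (-s) (by linarith)).comp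
      (tendsto_atTop_add_const_right atTop (-s) tendsto_id)).inv₀ (Real.exp_pos _).ne'
    rw [← Real.exp_neg, show -(γ * -s) = γ * s by ring] at h1
    refine h1.congr fun u => ?_
    simp only [Function.comp, id]
    rw [inv_div]
    congr 2
    ring
  · subst hs
    simp only [sub_zero, mul_zero, Real.exp_zero]
    refine tendsto_const_nhds.congr fun u => (div_self (hpos u).ne').symm
  · exact pos_case s hs

lemma one_add_lower {θ p q : ℝ} (hp0 : 0 ≤ p) (hp1 : p ≤ 1) (hq : |q| ≤ 1) :
    1 - |θ| ≤ 1 + θ * p * q := by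
  have h1 : |θ * p * q| ≤ |θ| := by
    rw [abs_mul, abs_mul, abs_of_nonneg hp0]
    have h2 : |θ| * p ≤ |θ| := mul_le_of_le_one_right (abs_nonneg _) hp1
    have h3 := mul_le_of_le_one_right (mul_nonneg (abs_nonneg θ) hp0) hq
    linarith
  have := neg_abs_le (θ * p * q)
  linarith

lemma kern {Ω : Type*} [MeasureSpace Ω] [IsProbabilityMeasure (ℙ : Measure Ω)]
    {X : Ω → ℝ} (hXm : Measurable X) {γ : ℝ} (h : MemLGamma X γ) {θ : ℝ} (hθ : |θ| < 1)
    (s C : ℝ) (hC : Real.exp (γ * s) < C) :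
    ∀ᶠ u in atTop, ∀ q : ℝ, |q| ≤ 1 →
      rvTail X (u - s) * (1 + θ * (1 - rvTail X (u - s)) * q) ≤
        C * (rvTail X u * (1 + θ * (1 - rvTail X u) * q)) := by
  have hT := rvTail_tendsto X hXm
  have hTs : Tendsto (fun u => rvTail X (u - s)) atTop (nhds 0) :=
    hT.comp (tendsto_atTop_add_const_right atTop (-s) tendsto_id)
  have hw : Tendsto (fun u => rvTail X (u - s) / rvTail X u *
      (1 + (rvTail X u + rvTail X (u - s)) / (1 - |θ|))) atTop
      (nhds (Real.exp (γ * s) * (1 + (0 + 0) / (1 - |θ|)))) :=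
    (memL_ratio h s).mul (tendsto_const_nhds.add ((hT.add hTs).div_const _))
  rw [add_zero, zero_div, add_zero, mul_one] at hw
  filter_upwards [hw.eventually_lt_const hC] with u hu q hq
  have hpos := memL_pos h.1 u
  have hδ : 0 < 1 - |θ| := by linarith
  set A := rvTail X u
  set B := rvTail X (u - s)
  have hB0 : 0 ≤ B := rvTail_nonneg _ _
  have hA1 : A ≤ 1 := rvTail_le_one _ _
  have hk := one_add_lower (θ := θ) (p := 1 - A) (q := q) (by linarith) (by linarith) hq
  set k := 1 + θ * (1 - A) * q
  have h1 : 1 + θ * (1 - B) * q ≤ k + (A + B) := by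
    have e : 1 + θ * (1 - B) * q = k + θ * q * (A - B) := by simp only [k]; ring
    have h2 : |θ * q * (A - B)| ≤ A + B := by
      rw [abs_mul, abs_mul]
      have h3 : |θ| * |q| ≤ 1 := mul_le_one₀ hθ.le (abs_nonneg _) hq
      have h4 : |A - B| ≤ A + B := by rw [abs_le]; constructor <;> linarith
      calc _ ≤ 1 * |A - B| := mul_le_mul_of_nonneg_right h3 (abs_nonneg _)
        _ ≤ _ := by linarith
    have := le_abs_self (θ * q * (A - B))
    linarith
  have h2 : k + (A + B) ≤ k * (1 + (A + B) / (1 - |θ|)) := by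
    have : (A + B) ≤ k * ((A + B) / (1 - |θ|)) := by
      calc A + B = (1 - |θ|) * ((A + B) / (1 - |θ|)) := by field_simp
        _ ≤ _ := mul_le_mul_of_nonneg_right hk (by positivity)
    linarith
  calc B * (1 + θ * (1 - B) * q) ≤ B * (k * (1 + (A + B) / (1 - |θ|))) :=
        mul_le_mul_of_nonneg_left (h1.trans h2) hB0
    _ = (B / A * (1 + (A + B) / (1 - |θ|))) * (A * k) := by field_simp
    _ ≤ C * (A * k) := mul_le_mul_of_nonneg_right hu.le (mul_nonneg hpos.le (by linarith))

lemma strip_kern {Ω : Type*} [MeasureSpace Ω] [IsProbabilityMeasure (ℙ : Measure Ω)]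
    {X Y : Ω → ℝ} (hXm : Measurable X) (hYm : Measurable Y) {γ : ℝ} (h : MemLGamma X γ) {θ : ℝ}
    (hθ : |θ| < 1) (hFGM : FGM X Y θ) (s C : ℝ) (hC : Real.exp (γ * s) < C) :
    ∀ᶠ u in atTop, ∀ a b : ℝ, a ≤ b →
      (ℙ : Measure Ω) {ω | u - s < X ω ∧ a < Y ω ∧ Y ω ≤ b} ≤
        ENNReal.ofReal C * ℙ {ω | u < X ω ∧ a < Y ω ∧ Y ω ≤ b} := by
  filter_upwards [kern hXm h hθ s C hC] with u hu a b hab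
  have hC0 : 0 ≤ C := (Real.exp_pos _).le.trans hC.le
  have h1 := fgm_strip X Y hXm hYm θ hFGM (u - s) a b hab
  have h2 := fgm_strip X Y hXm hYm θ hFGM u a b hab
  have ha0 := rvTail_nonneg Y a
  have hb0 := rvTail_nonneg Y b
  have ha1 := rvTail_le_one Y a
  have hb1 := rvTail_le_one Y b
  have hba := rvTail_anti Y hab
  have h3 := mul_le_mul_of_nonneg_left
    (hu (1 - rvTail Y a - rvTail Y b) (by rw [abs_le]; constructor <;> linarith))
    (sub_nonneg.mpr hba)
  rw [← h1, mul_left_comm, ← h2] at h3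
  rw [← ofReal_measureReal, ← ofReal_measureReal (μ := ℙ) (s := {ω | u < X ω ∧ a < Y ω ∧ Y ω ≤ b}),
    ← ENNReal.ofReal_mul hC0]
  exact ENNReal.ofReal_le_ofReal h3

lemma prod_tail_lower {Ω : Type*} [MeasureSpace Ω] [IsProbabilityMeasure (ℙ : Measure Ω)]
    {X Y : Ω → ℝ} (hXm : Measurable X) (hYm : Measurable Y) {θ : ℝ}
    (hFGM : FGM X Y θ) (M x : ℝ) (hM : 0 < M) (hx : 0 < x) :
    (1 - |θ|) * rvTail Y M * rvTail X (x / M) ≤ rvTail (fun ω => X ω * Y ω) x := by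
  have h1 := fgm_ext X Y hXm hYm θ hFGM (x / M) M
  have hX0 := rvTail_nonneg X (x / M)
  have hX1 := rvTail_le_one X (x / M)
  have hY0 := rvTail_nonneg Y M
  have hY1 := rvTail_le_one Y M
  have h2 := one_add_lower (θ := θ) (p := 1 - rvTail X (x / M)) (q := 1 - rvTail Y M)
    (by linarith) (by linarith) (by rw [abs_le]; constructor <;> linarith)
  have h3 : (ℙ : Measure Ω).real {ω | x / M < X ω ∧ M < Y ω} ≤
      (ℙ : Measure Ω).real {ω | x < X ω * Y ω} := by
    refine measureReal_mono fun ω hω => ?_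
    obtain ⟨h4, h5⟩ := hω
    have hX : 0 < X ω := (div_pos hx hM).trans h4
    rw [div_lt_iff₀ hM] at h4
    exact h4.trans (mul_lt_mul_of_pos_left h5 hX)
  change _ ≤ (ℙ : Measure Ω).real {ω | x < X ω * Y ω}
  refine le_trans ?_ h3
  rw [Measure.real, h1]
  calc _ = rvTail X (x / M) * rvTail Y M * (1 - |θ|) := by ring
    _ ≤ _ := mul_le_mul_of_nonneg_left h2 (mul_nonneg hX0 hY0)

lemma null_above {Ω : Type*} [MeasureSpace Ω] [IsProbabilityMeasure (ℙ : Measure Ω)]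
    (Y : Ω → ℝ) (b : ℝ) (h : ∀ y > b, rvTail Y y = 0) : (ℙ : Measure Ω) {ω | b < Y ω} = 0 := by
  have e : {ω | b < Y ω} ⊆ ⋃ n : ℕ, {ω | b + 1 / ((n : ℝ) + 1) < Y ω} := by
    intro ω hω
    have hpos : (0 : ℝ) < Y ω - b := sub_pos.mpr hω
    obtain ⟨n, hn⟩ := exists_nat_one_div_lt hpos
    refine Set.mem_iUnion.mpr ⟨n, ?_⟩
    change b + 1 / ((n : ℝ) + 1) < Y ω
    linarith
  refine measure_mono_null e (measure_iUnion_null fun n => ?_)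
  have hn : (0 : ℝ) < 1 / ((n : ℝ) + 1) := by positivity
  have h1 := h (b + 1 / ((n : ℝ) + 1)) (by linarith)
  exact (measureReal_eq_zero_iff (measure_ne_top _ _)).mp h1

lemma exists_pos_tail {Ω : Type*} [MeasureSpace Ω] [IsProbabilityMeasure (ℙ : Measure Ω)]
    (Y : Ω → ℝ) (hYm : Measurable Y) (hY : ∀ ω, 0 ≤ Y ω) (hYnd : ℙ {ω | Y ω = 0} ≠ 1) :
    ∃ M > 0, 0 < rvTail Y M := by
  by_contra! hcon
  apply hYnd
  have h0 := null_above Y 0 fun y hy => le_antisymm (hcon y hy) (rvTail_nonneg _ _)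
  rw [prob_compl_eq_zero_iff (measurableSet_eq_fun hYm measurable_const) |>.symm]
  convert h0 using 2
  ext ω
  simp only [Set.mem_compl_iff, Set.mem_ofPred_eq]
  exact ⟨fun h => lt_of_le_of_ne (hY ω) (Ne.symm h), fun h => h.ne'⟩

lemma lower_half {Ω : Type*} [MeasureSpace Ω] [IsProbabilityMeasure (ℙ : Measure Ω)]
    {X Y : Ω → ℝ} (hXm : Measurable X) (hYm : Measurable Y) (hY : ∀ ω, 0 ≤ Y ω)
    {γ : ℝ} (h : MemLGamma X γ) {θ : ℝ}
    (hθ : |θ| < 1) (hFGM : FGM X Y θ) (β : ℝ) (hβ : 0 < β) (hYβ : (ℙ : Measure Ω) {ω | β < Y ω} = 0)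
    (t D : ℝ) (ht : 0 < t) (hD : Real.exp (-(γ / β * t)) < D) :
    ∀ᶠ x in atTop, rvTail (fun ω => X ω * Y ω) x ≤ D * rvTail (fun ω => X ω * Y ω) (x - t) := by
  have hD' : Real.exp (γ * (-(t / β))) < D := by
    rw [show γ * (-(t / β)) = -(γ / β * t) by ring]; exact hD
  have hD0 : 0 ≤ D := (Real.exp_pos _).le.trans hD.le
  obtain ⟨u0, hu0⟩ := eventually_atTop.mp (strip_kern hXm hYm h hθ hFGM _ D hD')
  filter_upwards [eventually_gt_atTop t, eventually_ge_atTop ((u0 + t / β) * β)] with x hxt hxu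
  have key : (ℙ : Measure Ω) {ω | x < X ω * Y ω ∧ 0 < Y ω ∧ Y ω ≤ β} ≤
      ENNReal.ofReal D * ℙ {ω | x - t < X ω * Y ω ∧ 0 < Y ω ∧ Y ω ≤ β} := by
    apply strip_compare ℙ X Y hXm hYm 0 β (x - t) x _ ENNReal.ofReal_ne_top le_rfl
      (by linarith) (by linarith)
    intro a b ha hab hb
    rcases ha.eq_or_lt with rfl | ha
    · have : {ω | x < X ω * 0 ∧ 0 < Y ω ∧ Y ω ≤ b} = ∅ := by
        ext ω
        simp only [mul_zero, Set.mem_ofPred_eq, Set.mem_empty_iff_false, iff_false]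
        rintro ⟨h1, _⟩; linarith
      rw [this]; simp
    have hx0 : 0 < x := ht.trans hxt
    have hu : u0 ≤ x / a - t / β := by
      have h1 : u0 + t / β ≤ x / β := by rw [le_div_iff₀ hβ]; exact hxu
      have h2 : x / β ≤ x / a := by
        apply div_le_div_of_nonneg_left hx0.le ha; linarith
      linarith
    have h1 := hu0 _ hu a b hab.le
    have h3 : t / β ≤ t / a := by
      apply div_le_div_of_nonneg_left ht.le ha; linarith
    refine (measure_mono ?_).trans (h1.trans (mul_le_mul_right (measure_mono ?_) _))
    · rintro ω ⟨h4, h5⟩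
      refine ⟨?_, h5⟩
      rw [← div_lt_iff₀ ha] at h4
      linarith
    · rintro ω ⟨h4, h5⟩
      refine ⟨?_, h5⟩
      rw [← div_lt_iff₀ ha, sub_div]
      linarith
  have h1 : (ℙ : Measure Ω) {ω | x < X ω * Y ω} ≤ ENNReal.ofReal D * ℙ {ω | x - t < X ω * Y ω} := by
    calc (ℙ : Measure Ω) {ω | x < X ω * Y ω}
        ≤ ℙ ({ω | x < X ω * Y ω ∧ 0 < Y ω ∧ Y ω ≤ β} ∪ {ω | β < Y ω}) := by
          refine measure_mono fun ω hω => ?_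
          by_cases hb : β < Y ω
          · exact Or.inr hb
          · refine Or.inl ⟨hω, ?_, not_lt.mp hb⟩
            refine lt_of_le_of_ne (hY ω) fun h0 => ?_
            have h2 : x < X ω * Y ω := hω
            rw [← h0, mul_zero] at h2
            linarith
      _ ≤ _ := measure_union_le _ _
      _ = ℙ {ω | x < X ω * Y ω ∧ 0 < Y ω ∧ Y ω ≤ β} := by rw [hYβ, add_zero]
      _ ≤ _ := key
      _ ≤ _ := mul_le_mul_right (measure_mono fun ω hω => hω.1) _
  have h2 := ENNReal.toReal_mono (ENNReal.mul_ne_top ENNReal.ofReal_ne_top (measure_ne_top _ _)) h1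
  rw [ENNReal.toReal_mul, ENNReal.toReal_ofReal hD0] at h2
  exact h2

lemma upper_half {Ω : Type*} [MeasureSpace Ω] [IsProbabilityMeasure (ℙ : Measure Ω)]
    {X Y : Ω → ℝ} (hXm : Measurable X) (hYm : Measurable Y)
    {γ : ℝ} (h : MemLGamma X γ) {θ : ℝ}
    (hθ : |θ| < 1) (hFGM : FGM X Y θ) (hA2 : Assumption2 X Y) (M : ℝ) (hM : 0 < M)
    (t C ε : ℝ) (ht : 0 < t) (hC : Real.exp (γ * (t / M)) < C) (hε : 0 < ε)
    (hres : ∀ᶠ x in atTop, (ℙ : Measure Ω).real {ω | x - t < X ω * Y ω ∧ Y ω ≤ M} ≤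
      ε * rvTail (fun ω => X ω * Y ω) x) :
    ∀ᶠ x in atTop, rvTail (fun ω => X ω * Y ω) (x - t) ≤
      (C + ε + ε) * rvTail (fun ω => X ω * Y ω) x := by
  have hC0 : 0 ≤ C := (Real.exp_pos _).le.trans hC.le
  obtain ⟨u1, hu1⟩ := eventually_atTop.mp (strip_kern hXm hYm h hθ hFGM _ C hC)
  obtain ⟨u0, hu0pos, hu0⟩ : ∃ u0 > 0, u1 ≤ u0 := ⟨max u1 1, by positivity, le_max_left _ _⟩
  have hA := (hA2 (1 / u0) (by positivity)).bound hε
  filter_upwards [eventually_gt_atTop t, hres, hA] with x hxt hr hA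
  have hx0 : 0 < x := ht.trans hxt
  rw [Real.norm_of_nonneg (rvTail_nonneg _ _), Real.norm_of_nonneg (rvTail_nonneg _ _)] at hA
  have key : (ℙ : Measure Ω) {ω | x - t < X ω * Y ω ∧ M < Y ω ∧ Y ω ≤ 1 / u0 * x} ≤
      ENNReal.ofReal C * ℙ {ω | x < X ω * Y ω ∧ M < Y ω ∧ Y ω ≤ 1 / u0 * x} := by
    apply strip_compare ℙ X Y hXm hYm M _ x (x - t) _ ENNReal.ofReal_ne_top hM.le
      (by linarith) (by linarith)
    intro a b ha hab hb
    have ha0 : 0 < a := hM.trans_le ha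
    have hu : u1 ≤ x / a := by
      refine hu0.trans ?_
      rw [le_div_iff₀ ha0]
      have h1 : a ≤ 1 / u0 * x := hab.le.trans hb
      have h2 := mul_le_mul_of_nonneg_left h1 hu0pos.le
      have h3 : u0 * (1 / u0 * x) = x := by field_simp
      linarith
    have h1 := hu1 _ hu a b hab.le
    have h3 : t / a ≤ t / M := div_le_div_of_nonneg_left ht.le hM ha
    refine (measure_mono ?_).trans (h1.trans (mul_le_mul_right (measure_mono ?_) _))
    · rintro ω ⟨h4, h5⟩
      refine ⟨?_, h5⟩
      rw [← div_lt_iff₀ ha0, sub_div] at h4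
      linarith
    · rintro ω ⟨h4, h5⟩
      refine ⟨?_, h5⟩
      rwa [← div_lt_iff₀ ha0]
  have h2 := ENNReal.toReal_mono (ENNReal.mul_ne_top ENNReal.ofReal_ne_top (measure_ne_top _ _)) key
  rw [ENNReal.toReal_mul, ENNReal.toReal_ofReal hC0] at h2
  have h3 : (ℙ : Measure Ω).real {ω | x < X ω * Y ω ∧ M < Y ω ∧ Y ω ≤ 1 / u0 * x} ≤
      rvTail (fun ω => X ω * Y ω) x := measureReal_mono fun ω hω => hω.1
  have h3' := mul_le_mul_of_nonneg_left h3 hC0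
  have h4 : rvTail (fun ω => X ω * Y ω) (x - t) ≤
      (ℙ : Measure Ω).real {ω | x - t < X ω * Y ω ∧ M < Y ω ∧ Y ω ≤ 1 / u0 * x} +
      (ℙ : Measure Ω).real {ω | x - t < X ω * Y ω ∧ Y ω ≤ M} + rvTail Y (1 / u0 * x) := by
    calc rvTail (fun ω => X ω * Y ω) (x - t)
        ≤ (ℙ : Measure Ω).real (({ω | x - t < X ω * Y ω ∧ M < Y ω ∧ Y ω ≤ 1 / u0 * x} ∪
          {ω | x - t < X ω * Y ω ∧ Y ω ≤ M}) ∪ {ω | 1 / u0 * x < Y ω}) := by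
          refine measureReal_mono fun ω hω => ?_
          by_cases h1 : 1 / u0 * x < Y ω
          · exact Or.inr h1
          by_cases h2 : M < Y ω
          · exact Or.inl (Or.inl ⟨hω, h2, not_lt.mp h1⟩)
          · exact Or.inl (Or.inr ⟨hω, not_lt.mp h2⟩)
      _ ≤ _ := (measureReal_union_le _ _).trans (add_le_add_left (measureReal_union_le _ _) _)
  simp only [Measure.real] at *
  linarith

lemma resid_pos {Ω : Type*} [MeasureSpace Ω] [IsProbabilityMeasure (ℙ : Measure Ω)]
    {X Y : Ω → ℝ} (hXm : Measurable X) (hYm : Measurable Y) (hY : ∀ ω, 0 ≤ Y ω)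
    {γ : ℝ} (hγ : 0 < γ) (h : MemLGamma X γ) {θ : ℝ}
    (hθ : |θ| < 1) (hFGM : FGM X Y θ) (M M1 : ℝ) (hM : 0 < M) (hMM : M < M1)
    (hM1 : 0 < rvTail Y M1) (t ε : ℝ) (ht : 0 < t) (hε : 0 < ε) :
    ∀ᶠ x in atTop, (ℙ : Measure Ω).real {ω | x - t < X ω * Y ω ∧ Y ω ≤ M} ≤
      ε * rvTail (fun ω => X ω * Y ω) x := by
  have hM1p : 0 < M1 := hM.trans hMM
  set c := (1 - |θ|) * rvTail Y M1 with hc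
  have hc0 : 0 < c := mul_pos (by linarith) hM1
  obtain ⟨s, hs⟩ : ∃ s : ℝ, Real.exp (γ * (-s)) < ε * c := by
    have h1 : Tendsto (fun s : ℝ => Real.exp (γ * (-s))) atTop (nhds 0) :=
      Real.tendsto_exp_atBot.comp (tendsto_neg_atTop_atBot.const_mul_atBot hγ)
    exact (h1.eventually_lt_const (mul_pos hε hc0)).exists
  have h1 := ((memL_ratio h (-s)).eventually_lt_const hs)
  have h2 : Tendsto (fun x : ℝ => x / M1) atTop atTop := tendsto_id.atTop_div_const hM1p
  have h3 : Tendsto (fun x : ℝ => x * (1 / M - 1 / M1)) atTop atTop :=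
    tendsto_id.atTop_mul_const (sub_pos.mpr (one_div_lt_one_div_of_lt hM hMM))
  filter_upwards [eventually_gt_atTop t, h2.eventually h1,
    h3.eventually_ge_atTop (s + t / M)] with x hxt h4 h5
  have hx0 : 0 < x := ht.trans hxt
  rw [div_lt_iff₀ (memL_pos h.1 _)] at h4
  have h6 := prod_tail_lower hXm hYm hFGM M1 x hM1p hx0
  rw [← hc] at h6
  have h7 : (ℙ : Measure Ω).real {ω | x - t < X ω * Y ω ∧ Y ω ≤ M} ≤
      rvTail X (x / M1 - -s) := by
    refine measureReal_mono fun ω hω => ?_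
    obtain ⟨h8, h9⟩ := hω
    have hXpos : 0 < X ω := by
      by_contra hX
      have : X ω * Y ω ≤ 0 := mul_nonpos_of_nonpos_of_nonneg (not_lt.mp hX) (hY ω)
      linarith
    have h10 : x - t < X ω * M := h8.trans_le (mul_le_mul_of_nonneg_left h9 hXpos.le)
    rw [← div_lt_iff₀ hM, sub_div] at h10
    have h11 : x * (1 / M - 1 / M1) = x / M - x / M1 := by ring
    change x / M1 - -s < X ω
    linarith
  calc _ ≤ _ := h7
    _ ≤ ε * (c * rvTail X (x / M1)) := by rw [← mul_assoc]; exact h4.le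
    _ ≤ _ := mul_le_mul_of_nonneg_left h6 hε.le

lemma resid_zero {Ω : Type*} [MeasureSpace Ω] [IsProbabilityMeasure (ℙ : Measure Ω)]
    {X Y : Ω → ℝ} (hXm : Measurable X) (hYm : Measurable Y) (hY : ∀ ω, 0 ≤ Y ω)
    {θ : ℝ} (hθ : |θ| < 1) (hFGM : FGM X Y θ) (M1 : ℝ) (hM1p : 0 < M1)
    (hM1 : 0 < rvTail Y M1) (t ε : ℝ) (ht : 0 < t) (hε : 0 < ε) :
    ∃ M > 0, ∀ᶠ x in atTop, (ℙ : Measure Ω).real {ω | x - t < X ω * Y ω ∧ Y ω ≤ M} ≤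
      ε * rvTail (fun ω => X ω * Y ω) x := by
  set c := (1 - |θ|) * rvTail Y M1 with hc
  have hc0 : 0 < c := mul_pos (by linarith) hM1
  have hlim : Tendsto (fun n : ℕ => (ℙ : Measure Ω).real {ω | 1 / ((n : ℝ) + 1) < Y ω}) atTop
      (nhds ((ℙ : Measure Ω).real {ω | 0 < Y ω})) := by
    refine (ENNReal.tendsto_toReal (measure_ne_top _ _)).comp ?_
    apply tendsto_measure_of_tendsto_indicator_of_isFiniteMeasure
    · exact fun x => measurableSet_lt measurable_const hYm
    · intro ω
      by_cases hω : 0 < Y ω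
      · filter_upwards [(tendsto_one_div_add_atTop_nhds_zero_nat (𝕜 := ℝ)).eventually_lt_const hω]
          with n hn
        exact ⟨fun _ => hω, fun _ => hn⟩
      · refine Eventually.of_forall fun n => ⟨fun h1 => ?_, fun h1 => absurd h1 hω⟩
        have h2 : (0 : ℝ) < 1 / ((n : ℝ) + 1) := by positivity
        exact h2.trans h1
  have hlt : (ℙ : Measure Ω).real {ω | 0 < Y ω} - ε * c / 2 < (ℙ : Measure Ω).real {ω | 0 < Y ω} := by
    have : 0 < ε * c := mul_pos hε hc0
    linarith
  obtain ⟨n, hn1, hn2⟩ := ((hlim.eventually_const_lt hlt).and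
    ((tendsto_one_div_add_atTop_nhds_zero_nat (𝕜 := ℝ)).eventually_lt_const hM1p)).exists
  have hMp : (0 : ℝ) < 1 / ((n : ℝ) + 1) := by positivity
  set M : ℝ := 1 / ((n : ℝ) + 1)
  refine ⟨M, hMp, ?_⟩
  have h3 : Tendsto (fun x : ℝ => x * (1 / M - 1 / M1)) atTop atTop :=
    tendsto_id.atTop_mul_const (sub_pos.mpr (one_div_lt_one_div_of_lt hMp hn2))
  filter_upwards [eventually_gt_atTop t, h3.eventually_ge_atTop (t / M)] with x hxt h5
  have hx0 : 0 < x := ht.trans hxt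
  have h6 := prod_tail_lower hXm hYm hFGM M1 x hM1p hx0
  rw [← hc] at h6
  have h7 : (ℙ : Measure Ω).real {ω | x - t < X ω * Y ω ∧ Y ω ≤ M} ≤
      (ℙ : Measure Ω).real {ω | x / M1 < X ω ∧ 0 < Y ω ∧ Y ω ≤ M} := by
    refine measureReal_mono fun ω hω => ?_
    obtain ⟨h8, h9⟩ := hω
    have hXpos : 0 < X ω := by
      by_contra hX
      have : X ω * Y ω ≤ 0 := mul_nonpos_of_nonpos_of_nonneg (not_lt.mp hX) (hY ω)
      linarith
    have hYpos : 0 < Y ω := by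
      refine lt_of_le_of_ne (hY ω) fun h0 => ?_
      rw [← h0, mul_zero] at h8
      linarith
    have h10 : x - t < X ω * M := h8.trans_le (mul_le_mul_of_nonneg_left h9 hXpos.le)
    rw [← div_lt_iff₀ hMp, sub_div] at h10
    have h11 : x * (1 / M - 1 / M1) = x / M - x / M1 := by ring
    refine ⟨?_, hYpos, h9⟩
    linarith
  rw [fgm_strip X Y hXm hYm θ hFGM _ _ _ hMp.le] at h7
  have hA0 := rvTail_nonneg X (x / M1)
  have hA1 := rvTail_le_one X (x / M1)
  have hG0 := rvTail_nonneg Y 0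
  have hG1 := rvTail_le_one Y 0
  have hK0 := rvTail_nonneg Y M
  have hK1 := rvTail_le_one Y M
  have hGK := rvTail_anti Y hMp.le
  have hGK2 : rvTail Y 0 - rvTail Y M ≤ ε * c / 2 := by
    have : rvTail Y 0 - ε * c / 2 < rvTail Y M := hn1
    linarith
  have hk : 1 + θ * (1 - rvTail X (x / M1)) * (1 - rvTail Y 0 - rvTail Y M) ≤ 2 := by
    have := one_add_lower (θ := -θ) (p := 1 - rvTail X (x / M1))
      (q := 1 - rvTail Y 0 - rvTail Y M) (by linarith) (by linarith)
      (by rw [abs_le]; constructor <;> linarith)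
    rw [abs_neg] at this
    linarith
  calc _ ≤ _ := h7
    _ ≤ (rvTail Y 0 - rvTail Y M) * (rvTail X (x / M1) * 2) :=
      mul_le_mul_of_nonneg_left (mul_le_mul_of_nonneg_left hk hA0) (by linarith)
    _ ≤ (ε * c / 2) * (rvTail X (x / M1) * 2) :=
      mul_le_mul_of_nonneg_right hGK2 (by positivity)
    _ = ε * (c * rvTail X (x / M1)) := by ring
    _ ≤ _ := mul_le_mul_of_nonneg_left h6 hε.le

theorem product_memL_of_fgm {Ω : Type*} [MeasureSpace Ω] [IsProbabilityMeasure (ℙ : Measure Ω)]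
    (X Y : Ω → ℝ) (hXm : Measurable X) (hYm : Measurable Y)
    (hYnonneg : ∀ ω, 0 ≤ Y ω)
    (hFunb : UnboundedDist X)
    (hXnd : ℙ {ω | X ω = 0} ≠ 1) (hYnd : ℙ {ω | Y ω = 0} ≠ 1)
    (θ : ℝ) (hθ : |θ| < 1) (hFGM : FGM X Y θ) (hA2 : Assumption2 X Y)
    (γ : ℝ) (hγ : 0 ≤ γ) (hFL : MemLGamma X γ) :
    MemLGamma (fun ω => X ω * Y ω) (gammaOverBeta Y γ) := by
  obtain ⟨M0, hM0, hM0t⟩ := exists_pos_tail Y hYm hYnonneg hYnd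
  have hunb : UnboundedDist (fun ω => X ω * Y ω) := by
    intro x hx
    exact (mul_pos (mul_pos (by linarith) hM0t) (memL_pos hFunb _)).trans_le
      (prod_tail_lower hXm hYm hFGM M0 x hM0 hx)
  refine ⟨hunb, fun t ht => ?_⟩
  have hHpos := memL_pos hunb
  have hanti : ∀ x : ℝ, rvTail (fun ω => X ω * Y ω) x ≤ rvTail (fun ω => X ω * Y ω) (x - t) :=
    fun x => rvTail_anti _ (by linarith)
  -- lower half
  have hlow : ∀ D, Real.exp (-(gammaOverBeta Y γ * t)) < D → ∀ᶠ x in atTop,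
      rvTail (fun ω => X ω * Y ω) x ≤ D * rvTail (fun ω => X ω * Y ω) (x - t) := by
    intro D hD
    rw [gammaOverBeta] at hD
    split_ifs at hD with hb
    · have hβ : 0 < sSup {y : ℝ | 0 < rvTail Y y} := hM0.trans_le (le_csSup hb hM0t)
      refine lower_half hXm hYm hYnonneg hFL hθ hFGM _ hβ ?_ t D ht hD
      apply null_above
      intro y hy
      by_contra hne
      have : 0 < rvTail Y y := lt_of_le_of_ne (rvTail_nonneg _ _) (Ne.symm hne)
      exact absurd (le_csSup hb this) (not_le.mpr hy)
    · rw [zero_mul, neg_zero, Real.exp_zero] at hD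
      refine Eventually.of_forall fun x => ?_
      have h1 := hanti x
      have h2 := (hHpos (x - t)).le
      nlinarith
  -- upper half
  have hup : ∀ C, Real.exp (gammaOverBeta Y γ * t) < C → ∀ᶠ x in atTop,
      rvTail (fun ω => X ω * Y ω) (x - t) ≤ C * rvTail (fun ω => X ω * Y ω) x := by
    intro C hC
    obtain ⟨C', hC'1, hC'2⟩ := exists_between hC
    have hε : 0 < (C - C') / 2 := by linarith
    have hex : ∃ M > 0, Real.exp (γ * (t / M)) < C' ∧
        ∀ᶠ x in atTop, (ℙ : Measure Ω).real {ω | x - t < X ω * Y ω ∧ Y ω ≤ M} ≤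
          (C - C') / 2 * rvTail (fun ω => X ω * Y ω) x := by
      rcases hγ.eq_or_lt with hγ0 | hγ0
      · obtain ⟨M, hM, hMr⟩ := resid_zero hXm hYm hYnonneg hθ hFGM M0 hM0 hM0t t _ ht hε
        refine ⟨M, hM, ?_, hMr⟩
        have h1 : gammaOverBeta Y γ = 0 := by
          rw [gammaOverBeta, ← hγ0]; simp
        rw [h1] at hC'1
        rw [← hγ0]
        simpa using hC'1
      · have hex2 : ∃ M > 0, ∃ M1, M < M1 ∧ 0 < rvTail Y M1 ∧ Real.exp (γ * (t / M)) < C' := by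
          rw [gammaOverBeta] at hC'1
          split_ifs at hC'1 with hb
          · set β := sSup {y : ℝ | 0 < rvTail Y y} with hβd
            have hβ : 0 < β := hM0.trans_le (le_csSup hb hM0t)
            have hcont : ContinuousAt (fun M : ℝ => Real.exp (γ * (t / M))) β := by
              apply Real.continuous_exp.continuousAt.comp
              exact continuousAt_const.mul (continuousAt_const.div continuousAt_id hβ.ne')
            have hval : Real.exp (γ * (t / β)) < C' := by
              rw [show γ * (t / β) = γ / β * t by ring]; exact hC'1
            have h1 : ∀ᶠ M in nhdsWithin β (Iio β), Real.exp (γ * (t / M)) < C' ∧ 0 < M :=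
              nhdsWithin_le_nhds ((hcont.eventually_lt_const hval).and (eventually_gt_nhds hβ))
            obtain ⟨M, ⟨hM1, hM2⟩, hM3⟩ := (h1.and self_mem_nhdsWithin).exists
            obtain ⟨M1, hM4, hM5⟩ := exists_lt_of_lt_csSup ⟨M0, hM0t⟩ hM3
            exact ⟨M, hM2, M1, hM5, hM4, hM1⟩
          · rw [zero_mul] at hC'1
            have hlim : Tendsto (fun M : ℝ => Real.exp (γ * (t / M))) atTop
                (nhds (Real.exp (γ * 0))) :=
              (Real.continuous_exp.tendsto _).comp
                ((tendsto_const_nhds.div_atTop tendsto_id).const_mul γ)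
            rw [mul_zero] at hlim
            obtain ⟨M, hM1, hM2⟩ :=
              ((hlim.eventually_lt_const hC'1).and (eventually_gt_atTop 0)).exists
            obtain ⟨M1, hM4, hM5⟩ := not_bddAbove_iff.mp hb M
            exact ⟨M, hM2, M1, hM5, hM4, hM1⟩
        obtain ⟨M, hM, M1, hMM, hM1, hMC⟩ := hex2
        exact ⟨M, hM, hMC,
          resid_pos hXm hYm hYnonneg hγ0 hFL hθ hFGM M M1 hM hMM hM1 t _ ht hε⟩
    obtain ⟨M, hM, hMC, hMr⟩ := hex
    have h1 := upper_half hXm hYm hFL hθ hFGM hA2 M hM t C' _ ht hMC hε hMr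
    rwa [show C' + (C - C') / 2 + (C - C') / 2 = C by ring] at h1
  -- conclusion
  have hratio : Tendsto (fun x => rvTail (fun ω => X ω * Y ω) (x - t) /
      rvTail (fun ω => X ω * Y ω) x) atTop (nhds (Real.exp (gammaOverBeta Y γ * t))) := by
    rw [tendsto_order]
    constructor
    · intro a ha
      rcases le_or_gt a 0 with ha0 | ha0
      · exact Eventually.of_forall fun x => ha0.trans_lt (div_pos (hHpos _) (hHpos _))
      · obtain ⟨b, hb1, hb2⟩ := exists_between ha
        have hb0 : 0 < b := ha0.trans hb1
        have h1 : Real.exp (-(gammaOverBeta Y γ * t)) < b⁻¹ := by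
          rw [Real.exp_neg]
          exact inv_strictAnti₀ hb0 hb2
        filter_upwards [hlow _ h1] with x hx
        rw [lt_div_iff₀ (hHpos _)]
        rw [inv_mul_eq_div, le_div_iff₀ hb0] at hx
        have := hHpos x
        nlinarith
    · intro a ha
      obtain ⟨b, hb1, hb2⟩ := exists_between ha
      filter_upwards [hup b hb1] with x hx
      rw [div_lt_iff₀ (hHpos _)]
      have := hHpos x
      nlinarith
  apply isEquivalent_of_tendsto_one
  have h2 := hratio.const_mul (Real.exp (gammaOverBeta Y γ * t))⁻¹
  rw [inv_mul_cancel₀ (Real.exp_pos _).ne'] at h2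
  refine h2.congr fun x => ?_
  simp only [Pi.div_apply]
  have h3 := (hHpos x).ne'
  have h4 := (Real.exp_pos (gammaOverBeta Y γ * t)).ne'
  field_simp
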